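/- arXiv:2306.07008 — 2 statements merged into one kernel-verified Lean document; each statement's English description precedes it below -/
import Mathlib

section
/- Let N ≥ 100 be an integer and let 𝓕 = 𝓕_dom ⊔ 𝓕_res be a finite set of frequencies with positive amplitudes p_f, where each f ∈ 𝓕 is written f = (n_f + ν_f)/N with n_f ∈ {0,…,N−1} and |ν_f| ≤ 1/2, and the integers {n_f : f ∈ 𝓕_dom} are pairwise distinct. Let y ∈ ℂ^N with y_t = Σ_{f∈𝓕} p_f·exp(−2πi·f·t) for t = 0,…,N−1, set x_on := Re(F^{−1}y), and set R := Σ_{f∈𝓕_dom} p_f·|ν_f| + Σ_{f∈𝓕_res} p_f. Then for every f ∈ 𝓕_dom one has |x_on,n_f − p_f| ≤ 4R, and for every n ∈ {0,…,N−1} with n ∉ {n_f : f ∈ 𝓕_dom} one has |x_on,n| ≤ 4R. -/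
/-!
The coefficient of `F⁻¹` at the grid point `n` of a pure tone of frequency `(k + ν)/N` is the
Dirichlet kernel `D(n - k - ν)`, where `D(x) = N⁻¹ ∑_{t<N} exp(2πi t x/N)`. On integers `D` is the
indicator of `Nℤ`, everywhere `|D| ≤ 1`, and `D` is `π`-Lipschitz because the mean of `2π t/N` over
`t < N` is at most `π`. Hence moving a dominant frequency to its grid point costs at most `π p |ν|`,
and discarding a residual frequency costs at most `p`.
-/

open Matrix

/-- The shifted Fourier matrix `(F_ν)_{t,k} = exp(−2πi t (k+ν)/N)`; `F = Fmat N 0` is the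
discrete Fourier matrix. -/
noncomputable def Fmat (N : ℕ) (ν : ℝ) : Matrix (Fin N) (Fin N) ℂ :=
  Matrix.of fun t k =>
    Complex.exp (((-(2 * Real.pi * ((t : ℕ) : ℝ) * (((k : ℕ) : ℝ) + ν) / (N : ℝ))) : ℝ)
      * Complex.I)

/-- `F^{-1} y = (1/N) F^* y`. -/
noncomputable def invF (N : ℕ) (y : Fin N → ℂ) : Fin N → ℂ :=
  (((N : ℂ))⁻¹ • (Fmat N 0)ᴴ) *ᵥ y

open scoped Real

lemma norm_exp_ofReal_mul_I_sub_le (a b : ℝ) :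
    ‖Complex.exp (a * Complex.I) - Complex.exp (b * Complex.I)‖ ≤ |a - b| := by
  have hfactor : Complex.exp (a * Complex.I) - Complex.exp (b * Complex.I) =
      Complex.exp (b * Complex.I) * (Complex.exp (Complex.I * ((a - b : ℝ) : ℂ)) - 1) := by
    rw [mul_sub_one, ← Complex.exp_add]
    congr 2
    push_cast
    ring
  rw [hfactor, norm_mul, Complex.norm_exp_ofReal_mul_I, one_mul]
  exact Real.norm_exp_I_mul_ofReal_sub_one_le

lemma sum_range_cast_le_sq_div_two {K : Type*} [Field K] [LinearOrder K] [IsStrictOrderedRing K]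
    (N : ℕ) : ∑ t ∈ Finset.range N, (t : K) ≤ (N : K) ^ 2 / 2 := by
  have hgauss : (∑ t ∈ Finset.range N, t) * 2 ≤ N ^ 2 := by
    rw [Finset.sum_range_id_mul_two, sq]
    exact Nat.mul_le_mul_left N (Nat.sub_le N 1)
  have hgauss_cast : (((∑ t ∈ Finset.range N, t) * 2 : ℕ) : K) ≤ ((N ^ 2 : ℕ) : K) :=
    Nat.cast_le.2 hgauss
  rw [le_div_iff₀ two_pos]
  simpa only [Nat.cast_mul, Nat.cast_sum, Nat.cast_pow, Nat.cast_ofNat] using hgauss_cast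

section Single

variable {ι κ A : Type*} [DecidableEq κ] [NonAssocSemiring A] {s : Finset ι} {k : ι → κ}

lemma sum_mul_single_eq_of_injOn (hinj : Set.InjOn k s) (c : ι → A) {i : ι} (hi : i ∈ s) :
    ∑ j ∈ s, c j * (Pi.single (k j) 1 : κ → A) (k i) = c i := by
  rw [Finset.sum_eq_single_of_mem i hi, Pi.single_eq_same, mul_one]
  intro j hj hji
  rw [Pi.single_eq_of_ne fun h => hji (hinj hj hi h.symm), mul_zero]

lemma sum_mul_single_eq_zero (c : ι → A) {n : κ} (hn : ∀ i ∈ s, k i ≠ n) :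
    ∑ j ∈ s, c j * (Pi.single (k j) 1 : κ → A) n = 0 :=
  Finset.sum_eq_zero fun j hj => by rw [Pi.single_eq_of_ne (hn j hj).symm, mul_zero]

end Single

/-- The Dirichlet kernel `N⁻¹ ∑_{t<N} exp(2πi t x/N)`, normalised to equal `1` at `0` and scaled so
that the grid points of the discrete Fourier transform are the integers. -/
noncomputable def dirichletKernel (N : ℕ) (x : ℝ) : ℂ :=
  (N : ℂ)⁻¹ * ∑ t ∈ Finset.range N, Complex.exp ((2 * π * t * x / N : ℝ) * Complex.I)

lemma norm_dirichletKernel_le_one (N : ℕ) (x : ℝ) : ‖dirichletKernel N x‖ ≤ 1 := by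
  have hsum : ‖∑ t ∈ Finset.range N, Complex.exp ((2 * π * t * x / N : ℝ) * Complex.I)‖ ≤ N := by
    refine (norm_sum_le _ _).trans_eq ?_
    simp only [Complex.norm_exp_ofReal_mul_I, Finset.sum_const, Finset.card_range, nsmul_eq_mul,
      mul_one]
  rw [dirichletKernel, norm_mul, norm_inv, Complex.norm_natCast]
  exact inv_mul_le_one_of_le₀ hsum N.cast_nonneg

lemma norm_dirichletKernel_sub_le (N : ℕ) (x y : ℝ) :
    ‖dirichletKernel N x - dirichletKernel N y‖ ≤ π * |x - y| := by
  have hterm (t : ℕ) : ‖Complex.exp ((2 * π * t * x / N : ℝ) * Complex.I) -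
      Complex.exp ((2 * π * t * y / N : ℝ) * Complex.I)‖ ≤ 2 * π * |x - y| / N * t := by
    refine (norm_exp_ofReal_mul_I_sub_le _ _).trans_eq ?_
    have hdiff : 2 * π * t * x / N - 2 * π * t * y / N = 2 * π * t / N * (x - y) := by ring
    rw [hdiff, abs_mul, abs_of_nonneg (by positivity : 0 ≤ 2 * π * t / N)]
    ring
  rcases N.eq_zero_or_pos with rfl | hN
  · simpa [dirichletKernel] using mul_nonneg Real.pi_pos.le (abs_nonneg (x - y))
  rw [dirichletKernel, dirichletKernel, ← mul_sub, ← Finset.sum_sub_distrib, norm_mul, norm_inv,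
    Complex.norm_natCast]
  calc (N : ℝ)⁻¹ * ‖∑ t ∈ Finset.range N, (Complex.exp ((2 * π * t * x / N : ℝ) * Complex.I) -
          Complex.exp ((2 * π * t * y / N : ℝ) * Complex.I))‖
      ≤ (N : ℝ)⁻¹ * ∑ t ∈ Finset.range N, 2 * π * |x - y| / N * t := by
        gcongr
        exact norm_sum_le_of_le _ fun t _ => hterm t
    _ = (N : ℝ)⁻¹ * (2 * π * |x - y| / N * ∑ t ∈ Finset.range N, (t : ℝ)) := by
        rw [← Finset.mul_sum]
    _ ≤ (N : ℝ)⁻¹ * (2 * π * |x - y| / N * ((N : ℝ) ^ 2 / 2)) := by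
        gcongr
        exact sum_range_cast_le_sq_div_two N
    _ = π * |x - y| := by field_simp

lemma dirichletKernel_intCast {N : ℕ} (hN : N ≠ 0) (m : ℤ) :
    dirichletKernel N m = if (N : ℤ) ∣ m then 1 else 0 := by
  set ζ : ℂ := Complex.exp (2 * π * Complex.I / N) with hζ_def
  have hζ : IsPrimitiveRoot ζ N := Complex.isPrimitiveRoot_exp N hN
  have hterm (t : ℕ) : Complex.exp ((2 * π * t * m / N : ℝ) * Complex.I) = (ζ ^ m) ^ t := by
    rw [hζ_def, ← Complex.exp_int_mul, ← Complex.exp_nat_mul]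
    congr 1
    push_cast
    ring
  simp only [dirichletKernel, hterm]
  split_ifs with hdvd
  · simp [(hζ.zpow_eq_one_iff_dvd m).2 hdvd, hN]
  · have hone : (ζ ^ m) ^ N = 1 := by
      rw [← zpow_natCast, zpow_comm, zpow_natCast, hζ.pow_eq_one, _root_.one_zpow]
    rw [geom_sum_eq (mt (hζ.zpow_eq_one_iff_dvd m).1 hdvd), hone, sub_self, zero_div, mul_zero]

lemma dirichletKernel_sub_fin {N : ℕ} (n k : Fin N) :
    dirichletKernel N ((n : ℕ) - (k : ℕ)) = (Pi.single k 1 : Fin N → ℂ) n := by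
  have hdvd : (N : ℤ) ∣ (n : ℕ) - (k : ℕ) ↔ n = k := by
    rw [← Nat.modEq_iff_dvd, Fin.ext_iff]
    exact ⟨fun h => (h.eq_of_lt_of_lt k.2 n.2).symm, fun h => h ▸ rfl⟩
  have hkernel := dirichletKernel_intCast n.pos.ne' ((n : ℕ) - (k : ℕ) : ℤ)
  push_cast at hkernel
  simp only [hkernel, hdvd, Pi.single_apply]

section InvF

variable {N : ℕ} {ι : Type*}

lemma invF_sum_smul (s : Finset ι) (c : ι → ℂ) (v : ι → Fin N → ℂ) :
    invF N (∑ i ∈ s, c i • v i) = ∑ i ∈ s, c i • invF N (v i) := by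
  simp only [invF, mulVec_sum, mulVec_smul]

lemma invF_col_Fmat (ν : ℝ) (n k : Fin N) :
    invF N ((Fmat N ν).col k) n = dirichletKernel N ((n : ℕ) - ((k : ℕ) + ν)) := by
  have hterm (t : Fin N) : star (Fmat N 0 t n) * Fmat N ν t k =
      Complex.exp ((2 * π * (t : ℕ) * ((n : ℕ) - ((k : ℕ) + ν)) / N : ℝ) * Complex.I) := by
    rw [Fmat, Fmat, Matrix.of_apply, Matrix.of_apply, Complex.star_def, ← Complex.exp_conj,
      ← Complex.exp_add, map_mul, Complex.conj_ofReal, Complex.conj_I]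
    congr 1
    push_cast
    ring
  rw [invF, smul_mulVec]
  simp only [Pi.smul_apply, smul_eq_mul, mulVec, dotProduct, conjTranspose_apply,
    Matrix.col_apply, hterm, dirichletKernel, Finset.sum_range]

lemma norm_invF_col_Fmat_le_one (ν : ℝ) (n k : Fin N) : ‖invF N ((Fmat N ν).col k) n‖ ≤ 1 := by
  rw [invF_col_Fmat]
  exact norm_dirichletKernel_le_one N _

lemma norm_invF_col_Fmat_sub_single_le (ν : ℝ) (n k : Fin N) :
    ‖invF N ((Fmat N ν).col k) n - (Pi.single k 1 : Fin N → ℂ) n‖ ≤ π * |ν| := by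
  rw [invF_col_Fmat, ← dirichletKernel_sub_fin]
  refine (norm_dirichletKernel_sub_le N _ _).trans_eq ?_
  rw [sub_sub_sub_cancel_left, sub_add_cancel_left, abs_neg]

lemma norm_invF_sum_smul_col_sub_le [DecidableEq ι] {dom res : Finset ι}
    (hdisj : Disjoint dom res) (c : ι → ℂ) (ν : ι → ℝ) (k : ι → Fin N) (n : Fin N) :
    ‖invF N (∑ i ∈ dom ∪ res, c i • (Fmat N (ν i)).col (k i)) n -
        ∑ i ∈ dom, c i * (Pi.single (k i) 1 : Fin N → ℂ) n‖ ≤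
      π * ∑ i ∈ dom, ‖c i‖ * |ν i| + ∑ i ∈ res, ‖c i‖ := by
  rw [invF_sum_smul, Finset.sum_apply, Finset.sum_union hdisj, add_sub_right_comm,
    ← Finset.sum_sub_distrib, Finset.mul_sum]
  refine norm_add_le_of_le (norm_sum_le_of_le _ fun i _ => ?_) (norm_sum_le_of_le _ fun i _ => ?_)
  · rw [Pi.smul_apply, smul_eq_mul, ← mul_sub, norm_mul, mul_left_comm]
    gcongr
    exact norm_invF_col_Fmat_sub_single_le (ν i) n (k i)
  · rw [Pi.smul_apply, norm_smul]
    exact mul_le_of_le_one_right (norm_nonneg _) (norm_invF_col_Fmat_le_one (ν i) n (k i))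

end InvF

theorem xOn_dominant_recovery_general {N : ℕ} {ι : Type*} [Fintype ι] [DecidableEq ι]
    {dom res : Finset ι} (hdisj : Disjoint dom res) (hcover : dom ∪ res = Finset.univ)
    {nf : ι → ℕ} (hnf : ∀ i, nf i < N) {νf : ι → ℝ} {c : ι → ℂ}
    (hinj : Set.InjOn nf dom)
    {f : ι → ℝ} (hf : ∀ i, f i = ((nf i : ℝ) + νf i) / (N : ℝ)) {y : Fin N → ℂ}
    (hy : ∀ t : Fin N, y t = ∑ i, c i *
        Complex.exp (((-(2 * π * f i * ((t : ℕ) : ℝ))) : ℝ) * Complex.I))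
    {R : ℝ} (hR : R = ∑ i ∈ dom, ‖c i‖ * |νf i| + ∑ i ∈ res, ‖c i‖) :
    (∀ i ∈ dom, ‖invF N y ⟨nf i, hnf i⟩ - c i‖ ≤ 4 * R) ∧
    (∀ n : Fin N, (∀ i ∈ dom, nf i ≠ (n : ℕ)) → ‖invF N y n‖ ≤ 4 * R) := by
  set k : ι → Fin N := fun i => ⟨nf i, hnf i⟩
  have hy_cols : y = ∑ i ∈ dom ∪ res, c i • (Fmat N (νf i)).col (k i) := by
    ext t
    simp only [hcover, hy, hf, Finset.sum_apply, Pi.smul_apply, smul_eq_mul, Matrix.col_apply,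
      Fmat, Matrix.of_apply, k]
    refine Finset.sum_congr rfl fun i _ => ?_
    ring_nf
  have hbound (n : Fin N) :
      ‖invF N y n - ∑ i ∈ dom, c i * (Pi.single (k i) 1 : Fin N → ℂ) n‖ ≤ 4 * R := by
    rw [hy_cols, hR, mul_add]
    refine (norm_invF_sum_smul_col_sub_le hdisj c νf k n).trans ?_
    gcongr
    · exact Real.pi_le_four
    · exact le_mul_of_one_le_left (by positivity) (by norm_num)
  have hk_inj : Set.InjOn k dom := fun i hi j hj h => hinj hi hj (Fin.ext_iff.1 h)
  refine ⟨fun i hi => ?_, fun n hn => ?_⟩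
  · simpa only [sum_mul_single_eq_of_injOn hk_inj c hi] using hbound (k i)
  · have hk_ne : ∀ i ∈ dom, k i ≠ n := fun i hi h => hn i hi (Fin.ext_iff.1 h)
    simpa only [sum_mul_single_eq_zero c hk_ne, sub_zero] using hbound n

/-- For `N ≥ 100` and a signal with frequencies `f_i = (n_i + ν_i)/N` (`𝓕 = 𝓕_dom ⊔ 𝓕_res`,
positive amplitudes, the `n_i` pairwise distinct on `𝓕_dom`), the real part `x_on = Re(F⁻¹y)`
satisfies `|x_on,n_f − p_f| ≤ 4R` for `f ∈ 𝓕_dom` and `|x_on,n| ≤ 4R` off the dominant grid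
points, where `R = ∑_{f∈𝓕_dom} p_f |ν_f| + ∑_{f∈𝓕_res} p_f`. -/
theorem xOn_dominant_recovery (N : ℕ) (hN : 100 ≤ N)
    (ι : Type) [Fintype ι] [DecidableEq ι] (dom res : Finset ι)
    (hdisj : Disjoint dom res) (hcover : dom ∪ res = Finset.univ)
    (nf : ι → ℕ) (hnf : ∀ i, nf i < N)
    (νf : ι → ℝ) (hνf : ∀ i, |νf i| ≤ 1 / 2)
    (p : ι → ℝ) (hp : ∀ i, 0 < p i)
    (hinj : ∀ i ∈ dom, ∀ j ∈ dom, nf i = nf j → i = j)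
    (f : ι → ℝ) (hf : ∀ i, f i = ((nf i : ℝ) + νf i) / (N : ℝ))
    (y : Fin N → ℂ)
    (hy : ∀ t : Fin N, y t = ∑ i, (p i : ℂ) *
        Complex.exp (((-(2 * Real.pi * f i * ((t : ℕ) : ℝ))) : ℝ) * Complex.I))
    (R : ℝ) (hR : R = ∑ i ∈ dom, p i * |νf i| + ∑ i ∈ res, p i) :
    (∀ i ∈ dom, |(invF N y ⟨nf i, hnf i⟩).re - p i| ≤ 4 * R) ∧
    (∀ n : Fin N, (∀ i ∈ dom, nf i ≠ (n : ℕ)) → |(invF N y n).re| ≤ 4 * R) := by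
  have hR' : R = ∑ i ∈ dom, ‖(p i : ℂ)‖ * |νf i| + ∑ i ∈ res, ‖(p i : ℂ)‖ := by
    simpa only [Complex.norm_of_nonneg (hp _).le] using hR
  obtain ⟨hdom, hoff⟩ := xOn_dominant_recovery_general hdisj hcover hnf
    (fun i hi j hj => hinj i hi j hj) hf hy hR'
  exact ⟨fun i hi => by simpa using (Complex.abs_re_le_norm _).trans (hdom i hi),
    fun n hn => (Complex.abs_re_le_norm _).trans (hoff n hn)⟩
end

section
/- Let N ≥ 100 be an integer and let 𝓕 = 𝓕_dom ⊔ 𝓕_res be a finite set of frequencies with positive amplitudes p_f, where each f ∈ 𝓕 is written f = (n_f + ν_f)/N with n_f ∈ {0,…,N−1} and ν_f ∈ (−1/2, 1/2]. Assume the dominant frequencies are separated: for all distinct f, f' ∈ 𝓕_dom, the wrap-around distance min_{m∈ℤ} |f − f' − m| is at least 2/N. Let y ∈ ℂ^N with y_t = Σ_{f∈𝓕} p_f·exp(−2πi·f·t) for t = 0,…,N−1, and let y_off := i·F·Im(F^{−1}y) be its off-grid component. Then for every f ∈ 𝓕_dom: |p_f·sin(πν_f)| ≤ 3·( ‖y_off‖_∞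 + Σ_{f'∈𝓕_res} p_{f'} ), and consequently |p_f·ν_f| ≤ 2·( ‖y_off‖_∞ + Σ_{f'∈𝓕_res} p_{f'} ). -/
open Matrix

/-- The off-grid component `y_off = i · F · Im(F^{-1} y)`. -/
noncomputable def offGrid (N : ℕ) (y : Fin N → ℂ) : Fin N → ℂ :=
  fun t => Complex.I * ((Fmat N 0 *ᵥ fun n => (((invF N y n).im : ℝ) : ℂ)) t)

/-!
Conjugating `F⁻¹ y` reflects time, so for `1 ≤ t < N` the off-grid component is
`(y_t - conj y_{N-t}) / 2`, again an exponential sum over the same frequencies, with coefficients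
`c_f = p_f (1 - exp(2πi ν_f)) / 2` of modulus `|p_f sin(πν_f)|`. Removing the residual frequencies
leaves a dominant exponential sum `w` bounded by `S = ‖y_off‖_∞ + ∑ p_{f'}` at these times.

To isolate a dominant coefficient `c_j` of largest modulus, demodulate `w` by `exp(2πi f_j t)` and
sum over `t = a + b + 1` with `a < L`, `b < M`, `L + M = N`. The frequency `f_j` contributes
`L M c_j`, while any other `f` contributes a product of two geometric sums, which is at most
`|c_f| / sin²(π(f_j - f))` in modulus. For `2/N`-separated frequencies the weights
`1 / sin²(π(f_j - f))` add up to at most `N/2 - 1 + N²/12 ≤ (2/3) L M` (for `L`, `M` as equal as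
possible), whence `|c_j| ≤ 3 S`.
-/

section Separation

variable {ι : Type*} {s : Finset ι} {u : ι → ℝ} {δ : ℝ}

theorem sum_le_sum_Icc_of_separated {g : ℝ → ℝ} {b : ℝ} (hδ : 0 < δ)
    (hg : AntitoneOn g (Set.Ici δ)) (hg0 : ∀ x, 0 ≤ g x) (hu : ∀ i ∈ s, u i ∈ Set.Icc δ b)
    (hsep : ∀ i ∈ s, ∀ j ∈ s, i ≠ j → δ ≤ |u i - u j|) :
    ∑ i ∈ s, g (u i) ≤ ∑ k ∈ Finset.Icc 1 ⌊b / δ⌋₊, g (k * δ) := by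
  classical
  set k : ι → ℕ := fun i => ⌊u i / δ⌋₊ with hk
  have hnonneg : ∀ i ∈ s, 0 ≤ u i / δ := fun i hi => div_nonneg (hδ.le.trans (hu i hi).1) hδ.le
  have k_pos : ∀ i ∈ s, 1 ≤ k i := fun i hi => Nat.le_floor <| by
    simpa only [Nat.cast_one] using (one_le_div hδ).2 (hu i hi).1
  have k_le : ∀ i ∈ s, k i ≤ ⌊b / δ⌋₊ := fun i hi => by
    have := (hu i hi).2
    simp only [hk]
    gcongr
  have k_inj : Set.InjOn k s := fun i hi j hj hij => by
    by_contra hne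
    have hfloor : ⌊u i / δ⌋ = ⌊u j / δ⌋ := by
      rw [← Int.natCast_floor_eq_floor (hnonneg i hi), ← Int.natCast_floor_eq_floor (hnonneg j hj)]
      exact congrArg Nat.cast hij
    have hlt := Int.abs_sub_lt_one_of_floor_eq_floor hfloor
    rw [← sub_div, abs_div, abs_of_pos hδ, div_lt_one hδ] at hlt
    exact (hsep i hi j hj hne).not_gt hlt
  calc ∑ i ∈ s, g (u i)
      ≤ ∑ i ∈ s, g (k i * δ) := Finset.sum_le_sum fun i hi =>
        hg (le_mul_of_one_le_left hδ.le (by exact_mod_cast k_pos i hi)) (hu i hi).1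
          ((le_div_iff₀ hδ).1 (Nat.floor_le (hnonneg i hi)))
    _ = ∑ m ∈ s.image k, g (m * δ) := (Finset.sum_image (f := fun m : ℕ => g (m * δ)) k_inj).symm
    _ ≤ ∑ m ∈ Finset.Icc 1 ⌊b / δ⌋₊, g (m * δ) := by
        refine Finset.sum_le_sum_of_subset_of_nonneg (Finset.image_subset_iff.2 fun i hi => ?_)
          fun _ _ _ => hg0 _
        exact Finset.mem_Icc.2 ⟨k_pos i hi, k_le i hi⟩

theorem sum_half_add_inv_sq_le_of_separated (hδ : 0 < δ) (hδ1 : δ ≤ 1)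
    (hu : ∀ i ∈ s, u i ∈ Set.Icc δ (1 - δ))
    (hsep : ∀ i ∈ s, ∀ j ∈ s, i ≠ j → δ ≤ |u i - u j|) :
    ∑ i ∈ s, (1 / 2 + ((Real.pi * u i) ^ 2)⁻¹) ≤ (δ⁻¹ - 1) / 2 + δ⁻¹ ^ 2 / 6 := by
  set n := ⌊(1 - δ) / δ⌋₊
  have hanti : AntitoneOn (fun x : ℝ => 1 / 2 + ((Real.pi * x) ^ 2)⁻¹) (Set.Ici δ) :=
    fun x hx y _ hxy => by
      have : 0 < x := hδ.trans_le hx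
      dsimp only
      gcongr
  have hcount : (n : ℝ) ≤ δ⁻¹ - 1 := by
    have : (n : ℝ) ≤ (1 - δ) / δ := Nat.floor_le (div_nonneg (sub_nonneg.2 hδ1) hδ.le)
    rwa [sub_div, div_self hδ.ne', one_div] at this
  have hzeta : ∑ k ∈ Finset.Icc 1 n, 1 / (k : ℝ) ^ 2 ≤ Real.pi ^ 2 / 6 :=
    sum_le_hasSum _ (fun _ _ => by positivity) hasSum_zeta_two
  calc ∑ i ∈ s, (1 / 2 + ((Real.pi * u i) ^ 2)⁻¹)
      ≤ ∑ k ∈ Finset.Icc 1 n, (1 / 2 + ((Real.pi * (k * δ)) ^ 2)⁻¹) :=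
        sum_le_sum_Icc_of_separated hδ hanti (fun _ => by positivity) hu hsep
    _ = n / 2 + δ⁻¹ ^ 2 / Real.pi ^ 2 * ∑ k ∈ Finset.Icc 1 n, 1 / (k : ℝ) ^ 2 := by
        rw [Finset.sum_add_distrib, Finset.mul_sum]
        congr 1
        · simp only [Finset.sum_const, Nat.card_Icc, add_tsub_cancel_right, nsmul_eq_mul]
          ring
        · refine Finset.sum_congr rfl fun k _ => ?_
          simp only [mul_pow, mul_inv]
          ring
    _ ≤ (δ⁻¹ - 1) / 2 + δ⁻¹ ^ 2 / Real.pi ^ 2 * (Real.pi ^ 2 / 6) := by gcongr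
    _ = (δ⁻¹ - 1) / 2 + δ⁻¹ ^ 2 / 6 := by
        congr 1
        field_simp

theorem inv_sin_sq_le {x : ℝ} (hx0 : 0 < x) (hx : x ≤ Real.pi / 2) :
    (Real.sin x ^ 2)⁻¹ ≤ 1 + (x ^ 2)⁻¹ := by
  have hcos0 : 0 ≤ Real.cos x := Real.cos_nonneg_of_mem_Icc ⟨by linarith, hx⟩
  have hcos : Real.cos x ^ 2 ≤ 1 / (x ^ 2 + 1) := by
    have h := Real.cos_le_one_div_sqrt_sq_add_one (x := x) (by linarith) (by linarith)
    have h2 := pow_le_pow_left₀ hcos0 h 2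
    rwa [div_pow, one_pow, Real.sq_sqrt (by positivity)] at h2
  have hsin : x ^ 2 / (x ^ 2 + 1) ≤ Real.sin x ^ 2 := by
    calc x ^ 2 / (x ^ 2 + 1) = 1 - 1 / (x ^ 2 + 1) := by field_simp; ring
      _ ≤ 1 - Real.cos x ^ 2 := by gcongr
      _ = Real.sin x ^ 2 := (Real.sin_sq x).symm
  calc (Real.sin x ^ 2)⁻¹ ≤ (x ^ 2 / (x ^ 2 + 1))⁻¹ := by gcongr
    _ = 1 + (x ^ 2)⁻¹ := by field_simp

-- Summing the contributions of both endpoints avoids separating the two halves of `(0, 1)`.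
theorem inv_sin_pi_mul_sq_le {x : ℝ} (hx0 : 0 < x) (hx1 : x < 1) :
    (Real.sin (Real.pi * x) ^ 2)⁻¹ ≤
      (1 / 2 + ((Real.pi * x) ^ 2)⁻¹) + (1 / 2 + ((Real.pi * (1 - x)) ^ 2)⁻¹) := by
  wlog hx : x ≤ 1 / 2 generalizing x
  · have h := this (x := 1 - x) (by linarith) (by linarith) (by linarith)
    rwa [mul_one_sub, Real.sin_pi_sub, ← mul_one_sub, sub_sub_cancel, add_comm] at h
  have hpi := Real.pi_pos
  have h := inv_sin_sq_le (x := Real.pi * x) (by positivity) (by nlinarith)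
  have h0 : 0 ≤ ((Real.pi * (1 - x)) ^ 2)⁻¹ := by positivity
  linarith

theorem sum_inv_sin_pi_mul_sq_le_of_separated (hδ : 0 < δ) (hδ1 : δ ≤ 1)
    (hu : ∀ i ∈ s, u i ∈ Set.Icc δ (1 - δ))
    (hsep : ∀ i ∈ s, ∀ j ∈ s, i ≠ j → δ ≤ |u i - u j|) :
    ∑ i ∈ s, (Real.sin (Real.pi * u i) ^ 2)⁻¹ ≤ δ⁻¹ - 1 + δ⁻¹ ^ 2 / 3 := by
  have hleft := sum_half_add_inv_sq_le_of_separated hδ hδ1 hu hsep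
  have hright := sum_half_add_inv_sq_le_of_separated (u := fun i => 1 - u i) hδ hδ1
    (fun i hi => ⟨by linarith [(hu i hi).2], by linarith [(hu i hi).1]⟩)
    (fun i hi j hj hij => by
      rw [sub_sub_sub_cancel_left, abs_sub_comm]
      exact hsep i hi j hj hij)
  have hpoint := Finset.sum_le_sum fun i hi =>
    inv_sin_pi_mul_sq_le (x := u i) (hδ.trans_le (hu i hi).1) (by linarith [(hu i hi).2])
  rw [Finset.sum_add_distrib] at hpoint
  linarith

end Separation

section FourierChar

open scoped FourierTransform

theorem fourierChar_eq_one_iff {x : ℝ} : 𝐞 x = 1 ↔ ∃ n : ℤ, x = n := by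
  rw [Real.fourierChar_apply', Circle.exp_eq_one]
  refine exists_congr fun n => ?_
  rw [mul_comm, mul_left_inj' Real.two_pi_pos.ne']

theorem fourierChar_add_intCast (x : ℝ) (n : ℤ) : 𝐞 (x + n) = 𝐞 x := by
  rw [AddChar.map_add_eq_mul, fourierChar_eq_one_iff.2 ⟨n, rfl⟩, mul_one]

theorem fourierChar_mul_natCast (x : ℝ) (n : ℕ) : (𝐞 (x * n) : ℂ) = 𝐞 x ^ n := by
  rw [mul_comm, ← nsmul_eq_mul, AddChar.map_nsmul_eq_pow, Circle.coe_pow]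

theorem conj_fourierChar (x : ℝ) : starRingEnd ℂ (𝐞 x) = 𝐞 (-x) := by
  rw [AddChar.map_neg_eq_inv, Circle.coe_inv_eq_conj]

theorem norm_fourierChar_sub_one (x : ℝ) : ‖(𝐞 x : ℂ) - 1‖ = 2 * |Real.sin (Real.pi * x)| := by
  rw [Real.fourierChar_apply, mul_comm, Complex.norm_exp_I_mul_ofReal_sub_one, Real.norm_eq_abs,
    abs_mul, abs_two, mul_assoc, mul_div_cancel_left₀ _ (two_ne_zero' ℝ)]

theorem norm_geom_sum_fourierChar_le {x : ℝ} (hx0 : 0 < x) (hx1 : x < 1) (n : ℕ) :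
    ‖∑ a ∈ Finset.range n, (𝐞 x : ℂ) ^ a‖ ≤ (Real.sin (Real.pi * x))⁻¹ := by
  have hsin : 0 < Real.sin (Real.pi * x) :=
    Real.sin_pos_of_pos_of_lt_pi (by positivity) (mul_lt_of_lt_one_right Real.pi_pos hx1)
  have hnum : ‖(𝐞 x : ℂ) ^ n - 1‖ ≤ 2 := by
    refine (norm_sub_le _ _).trans_eq ?_
    rw [norm_pow, Circle.norm_coe, one_pow, norm_one]
    norm_num
  rw [← geom_sum_mul, norm_mul, norm_fourierChar_sub_one, abs_of_pos hsin] at hnum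
  rw [← one_div, le_div_iff₀ hsin]
  linarith

end FourierChar

section ExponentialSum

open scoped FourierTransform

variable {ι : Type*}

/-- The exponential sum `t ↦ ∑ i ∈ s, c i · exp(−2πi · f i · t)`: the signal with amplitudes `c`
and frequencies `f`. -/
noncomputable def expSum (s : Finset ι) (c : ι → ℂ) (f : ι → ℝ) (t : ℕ) : ℂ :=
  ∑ i ∈ s, c i * 𝐞 (-(f i * t))

/-- The frequencies `f i`, `i ∈ s`, are at pairwise wrap-around distance at least `δ`; the minimum
over integer shifts is encoded by quantifying over them. -/
def WrapSeparated (δ : ℝ) (s : Finset ι) (f : ι → ℝ) : Prop :=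
  ∀ i ∈ s, ∀ j ∈ s, i ≠ j → ∀ m : ℤ, δ ≤ |f i - f j - m|

variable {s : Finset ι} {c : ι → ℂ} {f : ι → ℝ} {δ S : ℝ} {L M : ℕ}

theorem norm_expSum_le (s : Finset ι) (c : ι → ℂ) (f : ι → ℝ) (t : ℕ) :
    ‖expSum s c f t‖ ≤ ∑ i ∈ s, ‖c i‖ :=
  norm_sum_le_of_le _ fun i _ => by rw [norm_mul, Circle.norm_coe, mul_one]

theorem sum_mul_fourierChar_pow_eq (s : Finset ι) (c : ι → ℂ) (f : ι → ℝ) (x : ℝ) (t : ℕ) :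
    ∑ i ∈ s, c i * (𝐞 (x - f i) : ℂ) ^ t = expSum s c f t * 𝐞 (x * t) := by
  rw [expSum, Finset.sum_mul]
  refine Finset.sum_congr rfl fun i _ => ?_
  rw [mul_assoc, ← Circle.coe_mul, ← AddChar.map_add_eq_mul, ← fourierChar_mul_natCast]
  ring_nf

theorem sum_sum_pow_eq_sum_mul_geom_sum (s : Finset ι) (c z : ι → ℂ) (L M : ℕ) :
    ∑ a ∈ Finset.range L, ∑ b ∈ Finset.range M, ∑ i ∈ s, c i * z i ^ (a + b + 1) =
      ∑ i ∈ s, c i * z i *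
        ((∑ a ∈ Finset.range L, z i ^ a) * ∑ b ∈ Finset.range M, z i ^ b) := by
  simp_rw [Finset.sum_comm (t := s), mul_assoc, Finset.sum_mul_sum, Finset.mul_sum]
  refine Finset.sum_congr rfl fun i _ => Finset.sum_congr rfl fun a _ =>
    Finset.sum_congr rfl fun b _ => ?_
  ring

theorem norm_sum_sum_pow_le {w : ℕ → ℂ} (hw : ∀ t, 1 ≤ t → t < L + M → ‖w t‖ ≤ S) :
    ‖∑ a ∈ Finset.range L, ∑ b ∈ Finset.range M, w (a + b + 1)‖ ≤ L * M * S := by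
  have hrow : ∀ a ∈ Finset.range L, ‖∑ b ∈ Finset.range M, w (a + b + 1)‖ ≤ M * S := by
    intro a ha
    rw [Finset.mem_range] at ha
    calc _ ≤ ∑ _b ∈ Finset.range M, S := norm_sum_le_of_le _ fun b hb =>
          hw _ (by omega) (by have := Finset.mem_range.1 hb; omega)
      _ = M * S := by simp
  calc _ ≤ ∑ _a ∈ Finset.range L, M * S := norm_sum_le_of_le _ hrow
    _ = L * M * S := by simp [mul_assoc]

theorem WrapSeparated.fract_mem_Icc (hf : WrapSeparated δ s f) {i j : ι} (hi : i ∈ s)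
    (hj : j ∈ s) (hij : i ≠ j) : Int.fract (f i - f j) ∈ Set.Icc δ (1 - δ) := by
  constructor
  · simpa only [Int.self_sub_floor, Int.abs_fract] using hf i hi j hj hij ⌊f i - f j⌋
  · have h := hf i hi j hj hij (⌊f i - f j⌋ + 1)
    rw [Int.cast_add, Int.cast_one, ← sub_sub, Int.self_sub_floor, abs_sub_comm,
      abs_of_pos (sub_pos.2 (Int.fract_lt_one _))] at h
    linarith

theorem WrapSeparated.le_abs_fract_sub_fract (hf : WrapSeparated δ s f) {i k : ι} (hi : i ∈ s)
    (hk : k ∈ s) (hik : i ≠ k) (x : ℝ) :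
    δ ≤ |Int.fract (x - f i) - Int.fract (x - f k)| := by
  have h := hf k hk i hi hik.symm (⌊x - f i⌋ - ⌊x - f k⌋)
  convert h using 2
  rw [Int.fract, Int.fract, Int.cast_sub]
  ring

theorem WrapSeparated.norm_geom_sum_mul_geom_sum_le (hf : WrapSeparated δ s f) (hδ : 0 < δ)
    {i j : ι} (hi : i ∈ s) (hj : j ∈ s) (hij : i ≠ j) (L M : ℕ) :
    ‖(∑ a ∈ Finset.range L, (𝐞 (f i - f j) : ℂ) ^ a) *
        ∑ b ∈ Finset.range M, (𝐞 (f i - f j) : ℂ) ^ b‖ ≤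
      (Real.sin (Real.pi * Int.fract (f i - f j)) ^ 2)⁻¹ := by
  have hx0 : 0 < Int.fract (f i - f j) := hδ.trans_le (hf.fract_mem_Icc hi hj hij).1
  have hx1 := Int.fract_lt_one (f i - f j)
  rw [← Int.fract_add_floor (f i - f j), fourierChar_add_intCast, Int.fract_add_floor, norm_mul,
    ← inv_pow, sq]
  gcongr
  · exact (norm_nonneg _).trans (norm_geom_sum_fourierChar_le hx0 hx1 L)
  · exact norm_geom_sum_fourierChar_le hx0 hx1 L
  · exact norm_geom_sum_fourierChar_le hx0 hx1 M

theorem WrapSeparated.sum_norm_geom_sum_mul_geom_sum_le [DecidableEq ι]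
    (hf : WrapSeparated δ s f) (hδ : 0 < δ) (hδ1 : δ ≤ 1) {j : ι} (hj : j ∈ s) (L M : ℕ) :
    ∑ i ∈ s.erase j, ‖(∑ a ∈ Finset.range L, (𝐞 (f j - f i) : ℂ) ^ a) *
        ∑ b ∈ Finset.range M, (𝐞 (f j - f i) : ℂ) ^ b‖ ≤ δ⁻¹ - 1 + δ⁻¹ ^ 2 / 3 := by
  have hmem : ∀ i ∈ s.erase j, j ≠ i ∧ i ∈ s := fun i hi =>
    ⟨(Finset.ne_of_mem_erase hi).symm, Finset.mem_of_mem_erase hi⟩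
  calc _ ≤ ∑ i ∈ s.erase j, (Real.sin (Real.pi * Int.fract (f j - f i)) ^ 2)⁻¹ :=
        Finset.sum_le_sum fun i hi =>
          hf.norm_geom_sum_mul_geom_sum_le hδ hj (hmem i hi).2 (hmem i hi).1 L M
    _ ≤ δ⁻¹ - 1 + δ⁻¹ ^ 2 / 3 := sum_inv_sin_pi_mul_sq_le_of_separated hδ hδ1
        (fun i hi => hf.fract_mem_Icc hj (hmem i hi).2 (hmem i hi).1)
        (fun i hi k hk hik => hf.le_abs_fract_sub_fract (hmem i hi).2 (hmem k hk).2 hik _)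

theorem WrapSeparated.norm_coeff_mul_le (hf : WrapSeparated δ s f) (hδ : 0 < δ) (hδ1 : δ ≤ 1)
    (hS : ∀ t, 1 ≤ t → t < L + M → ‖expSum s c f t‖ ≤ S) {j : ι} (hj : j ∈ s)
    (hmax : ∀ i ∈ s, ‖c i‖ ≤ ‖c j‖) :
    L * M * ‖c j‖ ≤ L * M * S + ‖c j‖ * (δ⁻¹ - 1 + δ⁻¹ ^ 2 / 3) := by
  classical
  let z : ι → ℂ := fun i => 𝐞 (f j - f i)
  let D : ι → ℂ := fun i => (∑ a ∈ Finset.range L, z i ^ a) * ∑ b ∈ Finset.range M, z i ^ b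
  have hpeak : c j * z j * D j = L * M * c j := by
    simp [z, D, mul_comm]
  have htotal : ‖∑ i ∈ s, c i * z i * D i‖ ≤ L * M * S := by
    rw [← sum_sum_pow_eq_sum_mul_geom_sum]
    refine norm_sum_sum_pow_le (w := fun t => ∑ i ∈ s, c i * z i ^ t) fun t ht htLM => ?_
    rw [sum_mul_fourierChar_pow_eq, norm_mul, Circle.norm_coe, mul_one]
    exact hS t ht htLM
  have hrest : ‖∑ i ∈ s.erase j, c i * z i * D i‖ ≤ ‖c j‖ * (δ⁻¹ - 1 + δ⁻¹ ^ 2 / 3) := by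
    calc ‖∑ i ∈ s.erase j, c i * z i * D i‖
        ≤ ∑ i ∈ s.erase j, ‖c j‖ * ‖D i‖ := norm_sum_le_of_le _ fun i hi => by
          rw [norm_mul, norm_mul, Circle.norm_coe, mul_one]
          gcongr
          exact hmax i (Finset.mem_of_mem_erase hi)
      _ ≤ ‖c j‖ * (δ⁻¹ - 1 + δ⁻¹ ^ 2 / 3) := by
          rw [← Finset.mul_sum]
          gcongr
          exact hf.sum_norm_geom_sum_mul_geom_sum_le hδ hδ1 hj L M
  calc L * M * ‖c j‖ = ‖c j * z j * D j‖ := by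
        rw [hpeak, norm_mul, norm_mul, Complex.norm_natCast, Complex.norm_natCast]
    _ = ‖∑ i ∈ s, c i * z i * D i - ∑ i ∈ s.erase j, c i * z i * D i‖ := by
        rw [← Finset.add_sum_erase _ _ hj, add_sub_cancel_right]
    _ ≤ _ := (norm_sub_le _ _).trans (add_le_add htotal hrest)

theorem WrapSeparated.norm_coeff_le {N : ℕ} (hN : 2 ≤ N) (hf : WrapSeparated (2 / N) s f)
    (hS : ∀ t, 1 ≤ t → t < N → ‖expSum s c f t‖ ≤ S) {i : ι} (hi : i ∈ s) : ‖c i‖ ≤ 3 * S := by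
  obtain ⟨j, hj, hmax⟩ := Finset.exists_max_image s (fun i => ‖c i‖) ⟨i, hi⟩
  refine (hmax i hi).trans ?_
  have hN' : (2 : ℝ) ≤ N := by exact_mod_cast hN
  obtain ⟨L, M, hLM, hprod⟩ : ∃ L M : ℕ, L + M = N ∧ N ^ 2 ≤ 4 * (L * M) + 1 := by
    obtain ⟨k, rfl | rfl⟩ := N.even_or_odd'
    · exact ⟨k, k, by omega, by nlinarith⟩
    · exact ⟨k, k + 1, by omega, by nlinarith⟩
  have hprod' : (N : ℝ) ^ 2 ≤ 4 * (L * M) + 1 := by exact_mod_cast hprod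
  have hLM0 : (0 : ℝ) < L * M := by nlinarith
  have hmain := hf.norm_coeff_mul_le (by positivity) ((div_le_one (by positivity)).2 hN')
    (fun t ht htN => hS t ht (htN.trans_eq hLM)) hj hmax
  -- The right side exceeds the left by at least `((N - 3) ^ 2 + 1) / 12`.
  have hoffdiag : (2 / (N : ℝ))⁻¹ - 1 + (2 / (N : ℝ))⁻¹ ^ 2 / 3 ≤ 2 / 3 * (L * M) := by
    rw [inv_div]
    nlinarith [sq_nonneg ((N : ℝ) - 3)]
  have hbound := mul_le_mul_of_nonneg_left hoffdiag (norm_nonneg (c j))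
  refine le_of_mul_le_mul_left ?_ hLM0
  linarith

end ExponentialSum

section OffGrid

open scoped FourierTransform

variable {N : ℕ}

theorem Fmat_apply (ν : ℝ) (t k : Fin N) :
    Fmat N ν t k = 𝐞 (-((t : ℝ) * ((k : ℝ) + ν) / N)) := by
  rw [Fmat, Matrix.of_apply, Real.fourierChar_apply]
  congr 3
  ring

theorem sum_fourierChar_pow_eq_zero {m : ℤ} (hm : ¬ (N : ℤ) ∣ m) :
    ∑ t ∈ Finset.range N, (𝐞 ((m : ℝ) / N) : ℂ) ^ t = 0 := by
  rcases eq_or_ne N 0 with rfl | hN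
  · simp
  have hN' : (N : ℝ) ≠ 0 := by exact_mod_cast hN
  have hpow : (𝐞 ((m : ℝ) / N) : ℂ) ^ N = 1 := by
    rw [← fourierChar_mul_natCast, div_mul_cancel₀ _ hN', Circle.coe_eq_one]
    exact fourierChar_eq_one_iff.2 ⟨m, rfl⟩
  have hne : (𝐞 ((m : ℝ) / N) : ℂ) ≠ 1 := by
    rw [Ne, Circle.coe_eq_one, fourierChar_eq_one_iff]
    rintro ⟨k, hk⟩
    rw [div_eq_iff hN', mul_comm] at hk
    exact hm ⟨k, by exact_mod_cast hk⟩
  have hgeom := geom_sum_mul (𝐞 ((m : ℝ) / N) : ℂ) N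
  rw [hpow, sub_self] at hgeom
  exact (mul_eq_zero.1 hgeom).resolve_right (sub_ne_zero.2 hne)

theorem conjTranspose_Fmat_mul_Fmat (N : ℕ) (ν : ℝ) :
    (Fmat N ν)ᴴ * Fmat N ν = (N : ℂ) • (1 : Matrix (Fin N) (Fin N) ℂ) := by
  ext k l
  have hentry : ((Fmat N ν)ᴴ * Fmat N ν) k l =
      ∑ t ∈ Finset.range N, (𝐞 ((((k : ℤ) - (l : ℤ) : ℤ) : ℝ) / N) : ℂ) ^ t := by
    rw [Matrix.mul_apply, ← Fin.sum_univ_eq_sum_range]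
    refine Finset.sum_congr rfl fun t _ => ?_
    rw [Matrix.conjTranspose_apply, RCLike.star_def, Fmat_apply, Fmat_apply, conj_fourierChar,
      ← Circle.coe_mul, ← AddChar.map_add_eq_mul, ← fourierChar_mul_natCast]
    push_cast
    ring_nf
  rw [hentry, Matrix.smul_apply, smul_eq_mul]
  rcases eq_or_ne k l with rfl | hkl
  · simp
  · rw [Matrix.one_apply_ne hkl, mul_zero]
    refine sum_fourierChar_pow_eq_zero fun hdvd => hkl (Fin.ext ?_)
    have := Int.eq_zero_of_abs_lt_dvd hdvd (by rw [abs_lt]; omega)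
    omega

theorem Fmat_mulVec_invF (y : Fin N → ℂ) : Fmat N 0 *ᵥ invF N y = y := by
  rcases eq_or_ne N 0 with rfl | hN
  · exact Subsingleton.elim _ _
  have hleft : ((N : ℂ)⁻¹ • (Fmat N 0)ᴴ) * Fmat N 0 = 1 := by
    rw [Matrix.smul_mul, conjTranspose_Fmat_mul_Fmat, inv_smul_smul₀ (Nat.cast_ne_zero.2 hN)]
  rw [invF, Matrix.mulVec_mulVec, mul_eq_one_comm.1 hleft, Matrix.one_mulVec]

theorem conj_Fmat_zero_apply {t t' : Fin N} (h : (t : ℕ) + t' = N) (k : Fin N) :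
    starRingEnd ℂ (Fmat N 0 t k) = Fmat N 0 t' k := by
  have hN : (N : ℝ) ≠ 0 := by
    have := t.pos
    positivity
  have ht : (t : ℝ) = N - t' := eq_sub_of_add_eq (by exact_mod_cast h)
  rw [Fmat_apply, Fmat_apply, conj_fourierChar, neg_neg, ht,
    ← fourierChar_add_intCast (-((t' : ℝ) * (k + 0) / N)) (k : ℕ)]
  congr 2
  push_cast
  field_simp
  ring

theorem Fmat_mulVec_conj {t t' : Fin N} (h : (t : ℕ) + t' = N) (x : Fin N → ℂ) :
    (Fmat N 0 *ᵥ fun n => starRingEnd ℂ (x n)) t = starRingEnd ℂ ((Fmat N 0 *ᵥ x) t') := by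
  simp only [Matrix.mulVec, dotProduct, map_sum, map_mul,
    conj_Fmat_zero_apply (add_comm (t : ℕ) t' ▸ h)]

-- Write `i · Im x = (x - conj x) / 2`; conjugating `x = F⁻¹ y` reflects time in `F x = y`.
theorem offGrid_apply (y : Fin N → ℂ) {t t' : Fin N} (h : (t : ℕ) + t' = N) :
    offGrid N y t = (y t - starRingEnd ℂ (y t')) / 2 := by
  have him : ∀ w : ℂ, Complex.I * (w.im : ℂ) = (w - starRingEnd ℂ w) / 2 := fun w => by
    rw [Complex.sub_conj]
    push_cast
    ring
  nth_rw 2 [← Fmat_mulVec_invF y]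
  nth_rw 3 [← Fmat_mulVec_invF y]
  rw [← Fmat_mulVec_conj h]
  simp only [offGrid, Matrix.mulVec, dotProduct, Finset.mul_sum, ← Finset.sum_sub_distrib,
    Finset.sum_div]
  refine Finset.sum_congr rfl fun n _ => ?_
  rw [mul_left_comm, him]
  ring

/-- The amplitude `p (1 - exp(2πi N f)) / 2` that a frequency `f` of amplitude `p` has in the
off-grid component; it vanishes when `f` is a multiple of `1 / N`. -/
noncomputable def offGridCoeff (N : ℕ) (p f : ℝ) : ℂ :=
  p * ((1 - 𝐞 (N * f)) / 2)

theorem norm_offGridCoeff (N : ℕ) (p f : ℝ) :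
    ‖offGridCoeff N p f‖ = |p * Real.sin (Real.pi * (N * f))| := by
  rw [offGridCoeff, norm_mul, norm_div, norm_sub_rev, norm_fourierChar_sub_one, Complex.norm_real,
    Real.norm_eq_abs, Complex.norm_two, mul_div_cancel_left₀ _ (two_ne_zero' ℝ), abs_mul]

theorem norm_offGridCoeff_le (N : ℕ) (p f : ℝ) : ‖offGridCoeff N p f‖ ≤ |p| := by
  rw [norm_offGridCoeff, abs_mul]
  exact mul_le_of_le_one_right (abs_nonneg p) (Real.abs_sin_le_one _)

theorem offGrid_expSum {ι : Type*} (s : Finset ι) (p f : ι → ℝ) {t : Fin N} (ht : 1 ≤ (t : ℕ)) :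
    offGrid N (fun t => expSum s (fun i => (p i : ℂ)) f t) t =
      expSum s (fun i => offGridCoeff N (p i) (f i)) f t := by
  rw [offGrid_apply (t' := ⟨N - t, by omega⟩) _ (by dsimp only; omega)]
  simp only [expSum, map_sum, ← Finset.sum_sub_distrib, Finset.sum_div]
  refine Finset.sum_congr rfl fun i _ => ?_
  have hreflect : starRingEnd ℂ (𝐞 (-(f i * (N - t : ℕ)))) = 𝐞 (N * f i) * 𝐞 (-(f i * t)) := by
    rw [conj_fourierChar, ← Circle.coe_mul, ← AddChar.map_add_eq_mul, Nat.cast_sub t.2.le]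
    ring_nf
  rw [map_mul, Complex.conj_ofReal, hreflect, offGridCoeff]
  ring

theorem norm_expSum_offGridCoeff_le {ι : Type*} [DecidableEq ι] {s r : Finset ι}
    (hsr : Disjoint s r) (p f : ι → ℝ) {t : ℕ} (ht : 1 ≤ t) (htN : t < N) :
    ‖expSum s (fun i => offGridCoeff N (p i) (f i)) f t‖ ≤
      (⨆ t, ‖offGrid N (fun t => expSum (s ∪ r) (fun i => (p i : ℂ)) f t) t‖) + ∑ i ∈ r, |p i| := by
  set y : Fin N → ℂ := fun t => expSum (s ∪ r) (fun i => (p i : ℂ)) f t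
  set c : ι → ℂ := fun i => offGridCoeff N (p i) (f i)
  have hsplit : expSum s c f t = offGrid N y ⟨t, htN⟩ - expSum r c f t := by
    rw [offGrid_expSum _ p f ht, eq_sub_iff_add_eq]
    exact (Finset.sum_union hsr).symm
  have hsup : ‖offGrid N y ⟨t, htN⟩‖ ≤ ⨆ t, ‖offGrid N y t‖ :=
    le_ciSup (f := fun t => ‖offGrid N y t‖) (Set.finite_range _).bddAbove ⟨t, htN⟩
  have hres : ‖expSum r c f t‖ ≤ ∑ i ∈ r, |p i| :=
    (norm_expSum_le r c f t).trans (Finset.sum_le_sum fun i _ => norm_offGridCoeff_le N _ _)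
  rw [hsplit]
  exact (norm_sub_le _ _).trans (add_le_add hsup hres)

end OffGrid

theorem abs_sin_pi_mul_intCast_add (n : ℤ) (x : ℝ) :
    |Real.sin (Real.pi * (n + x))| = |Real.sin (Real.pi * x)| := by
  rw [mul_add, add_comm, mul_comm Real.pi n, Real.sin_add_int_mul_pi, abs_mul, abs_zpow, abs_neg,
    abs_one, _root_.one_zpow, one_mul]

theorem two_mul_abs_le_abs_sin_pi_mul {x : ℝ} (hx : |x| ≤ 1 / 2) :
    2 * |x| ≤ |Real.sin (Real.pi * x)| := by
  have hpi := Real.pi_pos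
  have h : |Real.pi * x| ≤ Real.pi / 2 := by
    rw [abs_mul, abs_of_pos hpi]
    nlinarith
  calc 2 * |x| = 2 / Real.pi * |Real.pi * x| := by
        rw [abs_mul, abs_of_pos hpi]
        field_simp
    _ ≤ |Real.sin (Real.pi * x)| := Real.mul_abs_le_abs_sin h

theorem offgrid_small_implies_near_grid_general {N : ℕ} (hN : 2 ≤ N)
    {ι : Type*} [Fintype ι] [DecidableEq ι] {dom res : Finset ι}
    (hdisj : Disjoint dom res) (hcover : dom ∪ res = Finset.univ)
    {n : ι → ℤ} {ν : ι → ℝ} (hν : ∀ i ∈ dom, |ν i| ≤ 1 / 2) {p f : ι → ℝ}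
    (hf : ∀ i, f i = (n i + ν i) / N) (hsep : WrapSeparated (2 / N) dom f)
    {y : Fin N → ℂ} (hy : ∀ t : Fin N, y t = expSum Finset.univ (fun i => (p i : ℂ)) f t) :
    ∀ i ∈ dom,
      |p i * Real.sin (Real.pi * ν i)| ≤ 3 * ((⨆ t, ‖offGrid N y t‖) + ∑ j ∈ res, |p j|) ∧
      |p i * ν i| ≤ 2 * ((⨆ t, ‖offGrid N y t‖) + ∑ j ∈ res, |p j|) := by
  intro i hi
  obtain rfl : y = fun t : Fin N => expSum (dom ∪ res) (fun i => (p i : ℂ)) f t := by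
    rw [hcover]
    exact funext hy
  have hcoeff := hsep.norm_coeff_le hN
    (fun t ht htN => norm_expSum_offGridCoeff_le hdisj p f ht htN) hi
  rw [norm_offGridCoeff, hf, mul_div_cancel₀ _ (by positivity : (N : ℝ) ≠ 0), abs_mul,
    abs_sin_pi_mul_intCast_add, ← abs_mul] at hcoeff
  refine ⟨hcoeff, ?_⟩
  have hjordan := mul_le_mul_of_nonneg_left (two_mul_abs_le_abs_sin_pi_mul (hν i hi))
    (abs_nonneg (p i))
  have hnonneg : 0 ≤ |p i * ν i| := abs_nonneg _
  rw [abs_mul] at hcoeff hnonneg ⊢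
  linarith

/-- For `N ≥ 100` and a signal with frequencies `f_i = (n_i + ν_i)/N` (`𝓕 = 𝓕_dom ⊔ 𝓕_res`,
positive amplitudes, dominant frequencies separated by wrap-around distance at least `2/N`),
every `f ∈ 𝓕_dom` satisfies `|p_f sin(πν_f)| ≤ 3(‖y_off‖_∞ + ∑_{f'∈𝓕_res} p_{f'})` and
consequently `|p_f ν_f| ≤ 2(‖y_off‖_∞ + ∑_{f'∈𝓕_res} p_{f'})`. -/
theorem offgrid_small_implies_near_grid (N : ℕ) (hN : 100 ≤ N)
    (ι : Type) [Fintype ι] [DecidableEq ι] (dom res : Finset ι)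
    (hdisj : Disjoint dom res) (hcover : dom ∪ res = Finset.univ)
    (nf : ι → ℕ) (hnf : ∀ i, nf i < N)
    (νf : ι → ℝ) (hνf : ∀ i, -(1 / 2) < νf i ∧ νf i ≤ 1 / 2)
    (p : ι → ℝ) (hp : ∀ i, 0 < p i)
    (f : ι → ℝ) (hf : ∀ i, f i = ((nf i : ℝ) + νf i) / (N : ℝ))
    (hsep : ∀ i ∈ dom, ∀ j ∈ dom, i ≠ j → ∀ m : ℤ, 2 / (N : ℝ) ≤ |f i - f j - (m : ℝ)|)
    (y : Fin N → ℂ)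
    (hy : ∀ t : Fin N, y t = ∑ i, (p i : ℂ) *
        Complex.exp (((-(2 * Real.pi * f i * ((t : ℕ) : ℝ))) : ℝ) * Complex.I)) :
    ∀ i ∈ dom,
      |p i * Real.sin (Real.pi * νf i)|
          ≤ 3 * ((⨆ t : Fin N, ‖offGrid N y t‖) + ∑ j ∈ res, p j) ∧
      |p i * νf i|
          ≤ 2 * ((⨆ t : Fin N, ‖offGrid N y t‖) + ∑ j ∈ res, p j) := by
  have hy' (t : Fin N) : y t = expSum Finset.univ (fun i => (p i : ℂ)) f t := by
    simp only [hy, expSum, Real.fourierChar_apply, mul_neg, mul_assoc]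
  simpa only [abs_of_pos (hp _)] using offgrid_small_implies_near_grid_general
    (n := fun i => nf i) (by omega) hdisj hcover
    (fun i _ => abs_le.2 ⟨(hνf i).1.le, (hνf i).2⟩) (by simpa using hf) hsep hy'
end
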